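/- If Σ_{i∈U} p_i ≥ αk for some α > 1, then the total consideration probability of consideration sets of size exactly k satisfies Σ_{C⊆U, |C|=k} Pr_C(C) ≤ (α e^{1-α})^k / (1 - (α e^{1-α})^k). -/

import Mathlib

open scoped Classical
open Finset

noncomputable section

/-- Weight of a consideration set `C`: each item in `C` is considered (prob `p i`),
each item outside is not considered (prob `1 - p j`). -/
def considerWeight (n : ℕ) (p : Fin n → ℝ) (C : Finset (Fin n)) : ℝ :=
  (∏ i ∈ C, p i) * ∏ j ∈ Cᶜ, (1 - p j)

/-- Normalizing constant `z_{k,p}`: total weight of consideration sets of size at least `k`. -/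
def zConst (n k : ℕ) (p : Fin n → ℝ) : ℝ :=
  ∑ C ∈ Finset.univ.filter (fun C : Finset (Fin n) => k ≤ C.card), considerWeight n p C

/-- Probability of consideration set `C` (conditioned on `|C| ≥ k`). -/
def prC (n k : ℕ) (p : Fin n → ℝ) (C : Finset (Fin n)) : ℝ :=
  if k ≤ C.card then considerWeight n p C / zConst n k p else 0

/-- Plackett–Luce probability of the length-`k` ranking `r` given consideration set `C`. -/
def prPL (n k : ℕ) (u : Fin n → ℝ) (r : Fin k ↪ Fin n) (C : Finset (Fin n)) : ℝ :=
  if ∀ t : Fin k, r t ∈ C then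
    ∏ t : Fin k, Real.exp (u (r t)) /
      ∑ j ∈ C \ (Finset.Iio t).image r, Real.exp (u j)
  else 0

/-- Plackett–Luce-with-consideration (PL+C) probability of the ranking `r`. -/
def prPLC (n k : ℕ) (u p : Fin n → ℝ) (r : Fin k ↪ Fin n) : ℝ :=
  ∑ C : Finset (Fin n), prC n k p C * prPL n k u r C

/-- PL probability of a set of rankings. -/
def prPLset (n k : ℕ) (u : Fin n → ℝ) (R : Finset (Fin k ↪ Fin n)) (C : Finset (Fin n)) : ℝ :=
  ∑ r ∈ R, prPL n k u r C

/-- PL+C probability of a set of rankings. -/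
def prPLCset (n k : ℕ) (u p : Fin n → ℝ) (R : Finset (Fin k ↪ Fin n)) : ℝ :=
  ∑ r ∈ R, prPLC n k u p r

/-- `R_{i≤ℓ}`: the set of length-`k` rankings with item `i` among the top `ℓ` positions. -/
def topSet (n k : ℕ) (i : Fin n) (ℓ : ℕ) : Finset (Fin k ↪ Fin n) :=
  Finset.univ.filter (fun r => ∃ t : Fin k, (t : ℕ) < ℓ ∧ r t = i)

/-!
Write `|C|` for the size of the random set `C` in which the items are included independently with
probabilities `p i`. With `a`, `b`, `c` the probabilities of `|C| = k`, `|C| < k`, `|C| > k`,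
`a = a (a + b + c) ≤ (a + b) (a + c)`, so conditioning on `|C| ≥ k` leaves the event `|C| = k`
a probability of at most `a + b = P(|C| ≤ k)`. Chernoff's lower-tail bound, that is, Markov's
inequality for `t ^ |C|` at `t = α⁻¹`, gives `P(|C| ≤ k) ≤ (α e^{1-α})^k`.
-/

section FiniteSums

variable {ι R : Type*} [CommSemiring R] [PartialOrder R] [IsOrderedRing R]
  {s : Finset ι} {w : ι → R}

theorem sum_filter_eq_mul_sum_le_mul {β : Type*} [LinearOrder β] (hw : ∀ i ∈ s, 0 ≤ w i)
    (f : ι → β) (b : β) :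
    (∑ i ∈ s with f i = b, w i) * ∑ i ∈ s, w i ≤
      (∑ i ∈ s with f i ≤ b, w i) * ∑ i ∈ s with b ≤ f i, w i := by
  have hle : ∑ i ∈ s with f i ≤ b, w i =
      ∑ i ∈ s with f i = b, w i + ∑ i ∈ s with f i < b, w i := by
    simp only [le_iff_eq_or_lt, filter_or]
    exact sum_union (disjoint_filter.2 fun i _ heq => heq.not_lt)
  have hge : ∑ i ∈ s with b ≤ f i, w i =
      ∑ i ∈ s with f i = b, w i + ∑ i ∈ s with b < f i, w i := by
    simp only [le_iff_eq_or_lt, eq_comm (a := b), filter_or]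
    exact sum_union (disjoint_filter.2 fun i _ heq => heq.not_gt)
  have htotal : ∑ i ∈ s, w i =
      ∑ i ∈ s with f i ≤ b, w i + ∑ i ∈ s with b < f i, w i := by
    simp only [← sum_filter_add_sum_filter_not s (f · ≤ b), not_le]
  have hlt_nonneg : 0 ≤ ∑ i ∈ s with f i < b, w i :=
    sum_nonneg fun i hi => hw i (mem_of_mem_filter i hi)
  have hgt_nonneg : 0 ≤ ∑ i ∈ s with b < f i, w i :=
    sum_nonneg fun i hi => hw i (mem_of_mem_filter i hi)
  rw [htotal, hge, hle]
  calc (∑ i ∈ s with f i = b, w i) * (∑ i ∈ s with f i = b, w i +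
        ∑ i ∈ s with f i < b, w i + ∑ i ∈ s with b < f i, w i)
      ≤ _ + (∑ i ∈ s with f i < b, w i) * ∑ i ∈ s with b < f i, w i :=
        le_add_of_nonneg_right (mul_nonneg hlt_nonneg hgt_nonneg)
    _ = _ := by ring

theorem pow_mul_sum_filter_le_le_sum_pow_mul (hw : ∀ i ∈ s, 0 ≤ w i) (f : ι → ℕ) (k : ℕ)
    {t : R} (ht₀ : 0 ≤ t) (ht₁ : t ≤ 1) :
    t ^ k * ∑ i ∈ s with f i ≤ k, w i ≤ ∑ i ∈ s, t ^ f i * w i :=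
  calc t ^ k * ∑ i ∈ s with f i ≤ k, w i
      = ∑ i ∈ s with f i ≤ k, t ^ k * w i := mul_sum ..
    _ ≤ ∑ i ∈ s with f i ≤ k, t ^ f i * w i := by
        refine sum_le_sum fun i hi => ?_
        obtain ⟨his, hik⟩ := mem_filter.1 hi
        exact mul_le_mul_of_nonneg_right (pow_le_pow_of_le_one ht₀ ht₁ hik) (hw i his)
    _ ≤ ∑ i ∈ s, t ^ f i * w i :=
        sum_le_sum_of_subset_of_nonneg (filter_subset _ _) fun i his _ =>
          mul_nonneg (pow_nonneg ht₀ _) (hw i his)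

end FiniteSums

theorem mul_exp_one_sub_lt_one {x : ℝ} (hx : x ≠ 1) : x * Real.exp (1 - x) < 1 := by
  have hlt : x < Real.exp (x - 1) := by linarith [Real.add_one_lt_exp (sub_ne_zero.2 hx)]
  calc x * Real.exp (1 - x) < Real.exp (x - 1) * Real.exp (1 - x) :=
        mul_lt_mul_of_pos_right hlt (Real.exp_pos _)
    _ = 1 := by simp [← Real.exp_add]

section Consideration

variable {n : ℕ} {p : Fin n → ℝ}

theorem considerWeight_nonneg (hp : ∀ a, p a ∈ Set.Icc 0 1) (C : Finset (Fin n)) :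
    0 ≤ considerWeight n p C :=
  mul_nonneg (prod_nonneg fun a _ => (hp a).1) (prod_nonneg fun a _ => sub_nonneg.2 (hp a).2)

theorem sum_pow_card_mul_considerWeight (p : Fin n → ℝ) (t : ℝ) :
    ∑ C, t ^ #C * considerWeight n p C = ∏ a, (t * p a + (1 - p a)) := by
  simp only [prod_add, powerset_univ, prod_mul_distrib, prod_const, considerWeight,
    compl_eq_univ_sdiff, mul_assoc]

theorem sum_considerWeight (p : Fin n → ℝ) : ∑ C, considerWeight n p C = 1 := by
  simpa using sum_pow_card_mul_considerWeight p 1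

theorem sum_pow_card_mul_considerWeight_le_exp (hp : ∀ a, p a ∈ Set.Icc 0 1) {t : ℝ}
    (ht : 0 ≤ t) :
    ∑ C, t ^ #C * considerWeight n p C ≤ Real.exp ((t - 1) * ∑ a, p a) := by
  rw [sum_pow_card_mul_considerWeight, mul_sum, Real.exp_sum]
  refine prod_le_prod (fun a _ => ?_) fun a _ => ?_
  · exact add_nonneg (mul_nonneg ht (hp a).1) (sub_nonneg.2 (hp a).2)
  · linarith [Real.add_one_le_exp ((t - 1) * p a)]

theorem sum_considerWeight_card_le_le_pow (hp : ∀ a, p a ∈ Set.Icc 0 1) {k : ℕ} {α : ℝ}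
    (hα : 1 ≤ α) (hsum : α * k ≤ ∑ a, p a) :
    ∑ C with #C ≤ k, considerWeight n p C ≤ (α * Real.exp (1 - α)) ^ k := by
  have hα₀ : 0 < α := by linarith
  have hinv : α⁻¹ ≤ 1 := inv_le_one_of_one_le₀ hα
  have hexponent : (α⁻¹ - 1) * ∑ a, p a ≤ k * (1 - α) :=
    calc (α⁻¹ - 1) * ∑ a, p a ≤ (α⁻¹ - 1) * (α * k) :=
          mul_le_mul_of_nonpos_left hsum (sub_nonpos.2 hinv)
      _ = k * (1 - α) := by field_simp
  have hmarkov : (α⁻¹) ^ k * ∑ C with #C ≤ k, considerWeight n p C ≤ Real.exp (1 - α) ^ k :=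
    calc (α⁻¹) ^ k * ∑ C with #C ≤ k, considerWeight n p C
        ≤ ∑ C, (α⁻¹) ^ #C * considerWeight n p C :=
          pow_mul_sum_filter_le_le_sum_pow_mul (fun C _ => considerWeight_nonneg hp C) _ k
            (inv_nonneg.2 hα₀.le) hinv
      _ ≤ Real.exp ((α⁻¹ - 1) * ∑ a, p a) :=
          sum_pow_card_mul_considerWeight_le_exp hp (inv_nonneg.2 hα₀.le)
      _ ≤ Real.exp (k * (1 - α)) := Real.exp_le_exp.2 hexponent
      _ = Real.exp (1 - α) ^ k := Real.exp_nat_mul _ k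
  rwa [inv_pow, inv_mul_le_iff₀ (pow_pos hα₀ k), ← mul_pow] at hmarkov

theorem sum_prC_card_eq (k : ℕ) (p : Fin n → ℝ) :
    ∑ C with #C = k, prC n k p C = (∑ C with #C = k, considerWeight n p C) / zConst n k p := by
  rw [sum_div]
  refine sum_congr rfl fun C hC => ?_
  rw [prC, if_pos (mem_filter.1 hC).2.ge]

theorem sum_prC_card_eq_le (k : ℕ) (hp : ∀ a, p a ∈ Set.Icc 0 1) :
    ∑ C with #C = k, prC n k p C ≤ ∑ C with #C ≤ k, considerWeight n p C := by
  have hw : ∀ C ∈ univ, 0 ≤ considerWeight n p C := fun C _ => considerWeight_nonneg hp C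
  rw [sum_prC_card_eq]
  refine div_le_of_le_mul₀ (sum_nonneg fun C _ => hw C (mem_univ C))
    (sum_nonneg fun C _ => hw C (mem_univ C)) ?_
  simpa only [sum_considerWeight, mul_one, zConst] using sum_filter_eq_mul_sum_le_mul hw card k

theorem consider_exactly_k_bound_general (n k : ℕ) (p : Fin n → ℝ) (α : ℝ)
    (hp : ∀ a, p a ∈ Set.Icc 0 1) (hα : 1 ≤ α) (hsum : α * k ≤ ∑ a, p a) :
    ∑ C with #C = k, prC n k p C ≤ (α * Real.exp (1 - α)) ^ k :=
  (sum_prC_card_eq_le k hp).trans (sum_considerWeight_card_le_le_pow hp hα hsum)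

end Consideration

/-- the total consideration probability of sets of size exactly `k` is at most
`(α e^{1-α})^k / (1 - (α e^{1-α})^k)`. -/
theorem consider_exactly_k_bound (n k : ℕ) (p : Fin n → ℝ) (α : ℝ)
    (hp : ∀ a, 0 < p a ∧ p a ≤ 1) (hk : 1 ≤ k) (hkn : k ≤ n)
    (hα : 1 < α) (hsum : α * k ≤ ∑ a, p a) :
    ∑ C ∈ Finset.univ.filter (fun C : Finset (Fin n) => C.card = k), prC n k p C ≤
      (α * Real.exp (1 - α)) ^ k / (1 - (α * Real.exp (1 - α)) ^ k) := by
  have hq : (α * Real.exp (1 - α)) ^ k < 1 :=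
    pow_lt_one₀ (by positivity) (mul_exp_one_sub_lt_one hα.ne') (Nat.one_le_iff_ne_zero.1 hk)
  exact (consider_exactly_k_bound_general n k p α (fun a => ⟨(hp a).1.le, (hp a).2⟩) hα.le
    hsum).trans (le_div_self (by positivity) (sub_pos.2 hq) (sub_le_self _ (by positivity)))
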